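/- arXiv:1509.02766 — 2 statements merged into one kernel-verified Lean document; each statement's English description precedes it below -/
import Mathlib

section
/- Let α₁ and β₃ be real numbers, and suppose ε₁, ε₃ are real numbers satisfying ε₃ − ε₁ = β₃ − α₁ and h(ε₁) + h(ε₃) = h(α₁) + h(β₃). Then ε₁ = α₁ and ε₃ = β₃. -/
/-- The function `h` from the paper: `h(ε) = ε` if `ε ≥ 0`, `h(ε) = sinh ε` if `ε < 0`. -/
noncomputable def hfun (ε : ℝ) : ℝ := if 0 ≤ ε then ε else Real.sinh ε

theorem hfun_eq_ite_neg (ε : ℝ) : hfun ε = if ε < 0 then Real.sinh ε else ε := by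
  simp only [hfun, ← not_lt, ite_not]

theorem hfun_strictMono : StrictMono hfun := by
  rw [funext hfun_eq_ite_neg]
  refine Real.sinh_strictMono.ite' strictMono_id (fun _ _ hxy hy ↦ hxy.trans hy) ?_
  intro x y hx hy _
  calc Real.sinh x < 0 := Real.sinh_neg_iff.2 hx
    _ ≤ y := not_lt.1 hy

theorem strictMono_add_comp_add_left {α β : Type*}
    [Add α] [Preorder α] [AddLeftStrictMono α]
    [Add β] [Preorder β] [AddLeftStrictMono β] [AddRightStrictMono β]
    {f g : α → β} (hf : StrictMono f) (hg : StrictMono g) (c : α) :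
    StrictMono fun x ↦ f x + g (c + x) :=
  hf.add (hg.comp (add_right_strictMono (a := c)))

theorem stmt5_general {α β : Type*}
    [AddGroup α] [LinearOrder α] [AddLeftStrictMono α]
    [Add β] [Preorder β] [AddLeftStrictMono β] [AddRightStrictMono β]
    {f g : α → β} (hf : StrictMono f) (hg : StrictMono g) {x y x' y' : α}
    (h_sub : y' - x' = y - x) (h_add : f x' + g y' = f x + g y) :
    x' = x ∧ y' = y := by
  -- Both pairs are points `(t, c + t)`, along which `(t, u) ↦ f t + g u` is strictly increasing.
  obtain ⟨c, rfl⟩ : ∃ c, c + x = y := ⟨y - x, sub_add_cancel y x⟩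
  obtain rfl : y' = c + x' := by rwa [add_sub_cancel_right, sub_eq_iff_eq_add] at h_sub
  obtain rfl : x' = x := (strictMono_add_comp_add_left hf hg c).injective h_add
  exact ⟨rfl, rfl⟩

/-- Waves of different families cross without changing their strengths. -/
theorem stmt5 (α₁ β₃ ε₁ ε₃ : ℝ)
    (h1 : ε₃ - ε₁ = β₃ - α₁)
    (h2 : hfun ε₁ + hfun ε₃ = hfun α₁ + hfun β₃) :
    ε₁ = α₁ ∧ ε₃ = β₃ :=
  stmt5_general hfun_strictMono hfun_strictMono h1 h2
end

section
/- Let α and β be real numbers with α < 0 < β, and suppose ε₁, ε₃ are real numbers satisfying ε₃ − ε₁ = α + β and h(ε₁) + h(ε₃) = h(α) + h(β). Then ε₁ ≤ 0 and |ε₁| ≤ c(α)·min(|α|, β); moreover max(ε₃, 0) ≤ β and max(−ε₃, 0) ≤ −α, i.e. both the amount of shock and the amount of rarefaction of the interacting family decrease across the interaction. -/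
/-- The function `c` from the paper: `c(z) = (cosh z − 1)/(cosh z + 1)`. -/
noncomputable def cfun (z : ℝ) : ℝ := (Real.cosh z - 1) / (Real.cosh z + 1)

/-!
The function `h` is concave with slope at least `1`, and its slope at `α < 0` is `cosh α`. Since
`ε ↦ h ε - ε` is increasing, a reflected rarefaction `ε₁ > 0` would push `ε₃` above `α` and
violate the conservation of `h`. For the bounds on `|ε₁|`, estimate one of `h ε₁`, `h ε₃` by the
tangent line of `h` at `α` and the other one by the identity. The two choices give
`(cosh α + 1) |ε₁| ≤ (cosh α - 1) β` and `(cosh α + 1) |ε₁| ≤ (cosh α - 1) |α|`.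
-/

theorem le_tangent_of_concaveOn {s : Set ℝ} {f : ℝ → ℝ} {f' x y : ℝ} (hf : ConcaveOn ℝ s f)
    (hx : x ∈ s) (hy : y ∈ s) (hf' : HasDerivAt f f' x) : f y ≤ f x + f' * (y - x) := by
  rcases lt_trichotomy x y with hxy | rfl | hyx
  · have hslope : (f y - f x) / (y - x) ≤ f' :=
      slope_def_field f x y ▸ hf.slope_le_of_hasDerivAt hx hy hxy hf'
    rw [div_le_iff₀ (sub_pos.2 hxy)] at hslope
    linarith
  · simp
  · have hslope : f' ≤ (f x - f y) / (x - y) :=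
      slope_def_field f y x ▸ hf.le_slope_of_hasDerivAt hy hx hyx hf'
    rw [le_div_iff₀ (sub_pos.2 hyx)] at hslope
    linarith

theorem concaveOn_sinh_Iic : ConcaveOn ℝ (Set.Iic 0) Real.sinh := by
  refine AntitoneOn.concaveOn_of_deriv (convex_Iic 0) Real.continuous_sinh.continuousOn
    Real.differentiable_sinh.differentiableOn fun x _ y hy hxy ↦ ?_
  have hy₀ : y ≤ 0 := Set.mem_Iic.1 (interior_subset hy)
  rw [Real.deriv_sinh, Real.cosh_le_cosh]
  exact abs_le_abs_of_nonpos hy₀ hxy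

theorem hfun_eq_min (ε : ℝ) : hfun ε = min ε (Real.sinh ε) := by
  rcases le_or_gt 0 ε with hε | hε
  · rw [hfun, if_pos hε, min_eq_left (Real.self_le_sinh_iff.2 hε)]
  · rw [hfun, if_neg hε.not_ge, min_eq_right (Real.sinh_le_self_iff.2 hε.le)]

theorem hfun_of_nonneg {ε : ℝ} (hε : 0 ≤ ε) : hfun ε = ε :=
  if_pos hε

theorem hfun_of_nonpos {ε : ℝ} (hε : ε ≤ 0) : hfun ε = Real.sinh ε := by
  rw [hfun_eq_min, min_eq_right (Real.sinh_le_self_iff.2 hε)]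

theorem hfun_le_self (ε : ℝ) : hfun ε ≤ ε :=
  hfun_eq_min ε ▸ min_le_left _ _

theorem monotone_hfun_sub_self : Monotone fun ε ↦ hfun ε - ε := by
  simp only [hfun_eq_min, ← min_sub_sub_right, sub_self]
  exact monotone_const.min Real.sinh_sub_id_strictMono.monotone

theorem hfun_le_tangent {α : ℝ} (hα : α ≤ 0) (ε : ℝ) :
    hfun ε ≤ hfun α + Real.cosh α * (ε - α) := by
  have sinh_le_tangent {x : ℝ} (hx : x ≤ 0) :
      Real.sinh x ≤ Real.sinh α + Real.cosh α * (x - α) :=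
    le_tangent_of_concaveOn concaveOn_sinh_Iic hα hx (Real.hasDerivAt_sinh α)
  rw [hfun_of_nonpos hα]
  rcases le_total ε 0 with hε | hε
  · rw [hfun_of_nonpos hε]
    exact sinh_le_tangent hε
  · rw [hfun_of_nonneg hε]
    calc
      ε ≤ Real.sinh 0 + Real.cosh α * ε := by
        rw [Real.sinh_zero, zero_add]
        exact le_mul_of_one_le_left hε (Real.one_le_cosh α)
      _ ≤ Real.sinh α + Real.cosh α * (0 - α) + Real.cosh α * ε := by
        gcongr
        exact sinh_le_tangent le_rfl
      _ = Real.sinh α + Real.cosh α * (ε - α) := by ring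

theorem cfun_nonneg (z : ℝ) : 0 ≤ cfun z :=
  div_nonneg (sub_nonneg.2 (Real.one_le_cosh z)) (by positivity)

theorem cfun_le_one (z : ℝ) : cfun z ≤ 1 :=
  (div_le_one (by positivity)).2 (by linarith)

theorem le_cfun_mul_iff {x z t : ℝ} :
    x ≤ cfun z * t ↔ x * (Real.cosh z + 1) ≤ (Real.cosh z - 1) * t := by
  rw [cfun, div_mul_eq_mul_div, le_div_iff₀ (by positivity)]

section Interaction

variable {α β ε₁ ε₃ : ℝ}

theorem reflected_nonpos (hβ : 0 ≤ β) (hdiff : ε₃ - ε₁ = α + β)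
    (hsum : hfun ε₁ + hfun ε₃ = hfun α + hfun β) : ε₁ ≤ 0 := by
  by_contra! hε₁
  have hmono : hfun α - α ≤ hfun ε₃ - ε₃ := monotone_hfun_sub_self (by linarith)
  rw [hfun_of_nonneg hβ, hfun_of_nonneg hε₁.le] at hsum
  linarith

theorem neg_reflected_le_cfun_mul_rarefaction (hα : α ≤ 0) (hβ : 0 ≤ β)
    (hdiff : ε₃ - ε₁ = α + β) (hsum : hfun ε₁ + hfun ε₃ = hfun α + hfun β) :
    -ε₁ ≤ cfun α * β := by
  obtain rfl : ε₃ = ε₁ + α + β := by linarith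
  have htangent := hfun_le_tangent hα (ε₁ + α + β)
  have hself := hfun_le_self ε₁
  rw [hfun_of_nonneg hβ] at hsum
  rw [le_cfun_mul_iff]
  linarith

theorem neg_reflected_le_cfun_mul_shock (hα : α ≤ 0) (hβ : 0 ≤ β)
    (hdiff : ε₃ - ε₁ = α + β) (hsum : hfun ε₁ + hfun ε₃ = hfun α + hfun β) :
    -ε₁ ≤ cfun α * |α| := by
  have htangent := hfun_le_tangent hα ε₁
  have hself := hfun_le_self ε₃
  rw [hfun_of_nonneg hβ] at hsum
  rw [le_cfun_mul_iff, abs_of_nonpos hα]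
  linarith

end Interaction

/-- Interaction of a shock with a rarefaction of the same family: the reflected wave is a
shock with strength controlled by `c(α)`, and both the amounts of shock and of rarefaction
of the interacting family decrease. -/
theorem stmt7 (α β ε₁ ε₃ : ℝ) (hα : α < 0) (hβ : 0 < β)
    (h1 : ε₃ - ε₁ = α + β)
    (h2 : hfun ε₁ + hfun ε₃ = hfun α + hfun β) :
    ε₁ ≤ 0 ∧ |ε₁| ≤ cfun α * min |α| β ∧ max ε₃ 0 ≤ β ∧ max (-ε₃) 0 ≤ -α := by
  have hε₁ : ε₁ ≤ 0 := reflected_nonpos hβ.le h1 h2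
  have hshock : -ε₁ ≤ cfun α * |α| := neg_reflected_le_cfun_mul_shock hα.le hβ.le h1 h2
  have hrarefaction : -ε₁ ≤ cfun α * β :=
    neg_reflected_le_cfun_mul_rarefaction hα.le hβ.le h1 h2
  have hε₁β : -ε₁ ≤ β :=
    hrarefaction.trans (mul_le_of_le_one_left hβ.le (cfun_le_one α))
  refine ⟨hε₁, ?_, max_le (by linarith) hβ.le, max_le (by linarith) (by linarith)⟩
  rw [abs_of_nonpos hε₁, mul_min_of_nonneg _ _ (cfun_nonneg α)]
  exact le_min hshock hrarefaction
end
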